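/- arXiv:2404.17359 — 2 statements merged into one kernel-verified Lean document; each statement's English description precedes it below -/
import Mathlib

section
/- Let D = ℝ^d \ S with S closed of measure zero, ρ a regularized distance to S with 0 < ρ ≤ 1, and {φ_{j,l}} a resolution of unity subordinate to a Whitney decomposition {Q_{j,k_l}} of D (supp φ_{j,l} ⊂ 2Q_{j,k_l}, |∂^α φ_{j,l}| ≤ c_α 2^{j|α|}, Σ φ_{j,l} = 1, uniformly bounded overlap). Then for all m ∈ ℕ₀, 1 < p < ∞, a ∈ ℝ and all u ∈ K^m_{a,p}(D): ‖u‖_{K^m_{a,p}(D)}^p ∼ Σ_{j,l} ‖φ_{j,l} u‖_{K^m_{a,p}(D)}^p, with implicit constants independent of u. -/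
open MeasureTheory Set

/-- The `p`-th power of the Kondratiev norm `‖u‖_{K^m_{a,p}(D)}^p`, with order-`n`
multiindex derivatives encoded via the iterated Fréchet derivative. -/
noncomputable def KondratievNormP {d : ℕ} (D : Set (EuclideanSpace ℝ (Fin d)))
    (ρ : EuclideanSpace ℝ (Fin d) → ℝ) (m : ℕ) (a p : ℝ)
    (u : EuclideanSpace ℝ (Fin d) → ℂ) : ENNReal :=
  ∑ n ∈ Finset.range (m + 1),
    ∫⁻ x in D, ENNReal.ofReal ((ρ x ^ ((n : ℝ) - a) * ‖iteratedFDeriv ℝ n u x‖) ^ p)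

/-!
On the support of `φ i` the weight `ρ` is comparable to a constant `r i`, and the `n`-th derivatives
of `φ i` are `O(r i ^ (-n))`, so multiplication by `φ i` is bounded in scale-invariant terms.
By the Leibniz rule the integrand of the norm of `φ i • u` is at most a constant times that of `u`,
and bounded overlap lets these bounds be summed over `i`. Conversely, at most `N` of the functions
`φ i` are nonzero at a given point, so one of them is at least `1 / N` there, and the Leibniz rule
for `u = (φ i)⁻¹ • (φ i • u)` bounds `u` by that single piece. The identity `u = ∑ φ i • u` is not
used: the overlap is finite only pointwise, so the sum need not be differentiable term by term.

Integrals and sums are interchanged only after `ρ` has been replaced by the constants `r i`, since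
`ρ` is not assumed measurable.
-/

open scoped ENNReal NNReal Topology

section LocalDerivativeBounds

variable {𝕜 E F G : Type*} [NontriviallyNormedField 𝕜] [NormedAddCommGroup E] [NormedSpace 𝕜 E]
  [NormedAddCommGroup F] [NormedSpace 𝕜 F] [NormedAddCommGroup G] [NormedSpace 𝕜 G]

lemma exists_isOpen_contDiffOn_of_contDiffAt {f : E → F} {x : E} {n : ℕ}
    (hf : ContDiffAt 𝕜 n f x) : ∃ U, IsOpen U ∧ x ∈ U ∧ ContDiffOn 𝕜 n f U := by
  obtain ⟨V, hV, hfV⟩ := hf.contDiffOn le_rfl (by simp)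
  obtain ⟨U, hUV, hU, hxU⟩ := mem_nhds_iff.1 hV
  exact ⟨U, hU, hxU, hfV.mono hUV⟩

lemma norm_iteratedFDeriv_smul_le_of_contDiffAt {f : E → 𝕜} {g : E → F} {x : E} {n : ℕ}
    (hf : ContDiffAt 𝕜 n f x) (hg : ContDiffAt 𝕜 n g x) :
    ‖iteratedFDeriv 𝕜 n (fun y => f y • g y) x‖ ≤ ∑ i ∈ Finset.range (n + 1),
      (n.choose i : ℝ) * ‖iteratedFDeriv 𝕜 i f x‖ * ‖iteratedFDeriv 𝕜 (n - i) g x‖ := by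
  obtain ⟨U, hU, hxU, hfU⟩ := exists_isOpen_contDiffOn_of_contDiffAt hf
  obtain ⟨V, hV, hxV, hgV⟩ := exists_isOpen_contDiffOn_of_contDiffAt hg
  have hUV : IsOpen (U ∩ V) := hU.inter hV
  simpa only [iteratedFDerivWithin_of_isOpen _ hUV ⟨hxU, hxV⟩] using
    norm_iteratedFDerivWithin_smul_le (hfU.mono inter_subset_left) (hgV.mono inter_subset_right)
      hUV.uniqueDiffOn ⟨hxU, hxV⟩ le_rfl

lemma norm_iteratedFDeriv_comp_le_of_contDiffAt {g : F → G} {f : E → F} {x : E} {n : ℕ}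
    (hg : ContDiffAt 𝕜 n g (f x)) (hf : ContDiffAt 𝕜 n f x) {C B : ℝ}
    (hC : ∀ i ≤ n, ‖iteratedFDeriv 𝕜 i g (f x)‖ ≤ C)
    (hB : ∀ i, 1 ≤ i → i ≤ n → ‖iteratedFDeriv 𝕜 i f x‖ ≤ B ^ i) :
    ‖iteratedFDeriv 𝕜 n (g ∘ f) x‖ ≤ n.factorial * C * B ^ n := by
  obtain ⟨V, hV, hfxV, hgV⟩ := exists_isOpen_contDiffOn_of_contDiffAt hg
  obtain ⟨U, hU, hxU, hfU⟩ := exists_isOpen_contDiffOn_of_contDiffAt hf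
  have hW : IsOpen (U ∩ f ⁻¹' V) := hfU.continuousOn.isOpen_inter_preimage hU hV
  have hxW : x ∈ U ∩ f ⁻¹' V := ⟨hxU, hfxV⟩
  rw [← iteratedFDerivWithin_of_isOpen n hW hxW]
  refine norm_iteratedFDerivWithin_comp_le hgV (hfU.mono inter_subset_left) le_rfl
    hV.uniqueDiffOn hW.uniqueDiffOn (fun y hy => hy.2) hxW (fun i hi => ?_) fun i hi₁ hi => ?_
  · simpa only [iteratedFDerivWithin_of_isOpen i hV hfxV] using hC i hi
  · simpa only [iteratedFDerivWithin_of_isOpen i hW hxW] using hB i hi₁ hi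

end LocalDerivativeBounds

lemma norm_iteratedFDeriv_inv_eq (n : ℕ) (t : ℝ) :
    ‖iteratedFDeriv ℝ n (fun s : ℝ => s⁻¹) t‖ = n.factorial * |t|⁻¹ ^ (n + 1) := by
  have hzpow : t ^ (-1 - n : ℤ) = t⁻¹ ^ (n + 1) := by
    rw [inv_pow, ← zpow_natCast, ← zpow_neg]
    push_cast
    ring_nf
  rw [norm_iteratedFDeriv_eq_norm_iteratedDeriv, iteratedDeriv_eq_iterate,
    show (fun s : ℝ => s⁻¹) = Inv.inv from rfl, iter_deriv_inv, hzpow]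
  simp

lemma norm_iteratedFDeriv_inv_comp_le {E : Type*} [NormedAddCommGroup E] [NormedSpace ℝ E]
    {f : E → ℝ} {x : E} {n : ℕ} (hf : ContDiffAt ℝ n f x) {K B : ℝ} (hK : 1 ≤ K)
    (hfx : 1 ≤ K * |f x|) (hB : ∀ i, 1 ≤ i → i ≤ n → ‖iteratedFDeriv ℝ i f x‖ ≤ B ^ i) :
    ‖iteratedFDeriv ℝ n (fun y => (f y)⁻¹) x‖ ≤
      n.factorial * (n.factorial * K ^ (n + 1)) * B ^ n := by
  have hfx₀ : 0 < |f x| := pos_of_mul_pos_right (one_pos.trans_le hfx) (by positivity)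
  have hinv : |f x|⁻¹ ≤ K := by rwa [inv_le_iff_one_le_mul₀ hfx₀]
  refine norm_iteratedFDeriv_comp_le_of_contDiffAt (g := fun s : ℝ => s⁻¹)
    (contDiffAt_inv ℝ (abs_pos.1 hfx₀)) hf (fun i hi => ?_) hB
  calc ‖iteratedFDeriv ℝ i (fun s : ℝ => s⁻¹) (f x)‖ = i.factorial * |f x|⁻¹ ^ (i + 1) :=
        norm_iteratedFDeriv_inv_eq i (f x)
    _ ≤ n.factorial * K ^ (i + 1) := by gcongr
    _ ≤ n.factorial * K ^ (n + 1) := by gcongr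

lemma sum_ofReal_rpow_le_of_forall_le_sum {ι : Type*} (s : Finset ι) {v w : ι → ℝ} {K p : ℝ}
    (hK : 0 ≤ K) (hp : 0 ≤ p) (hv : ∀ i ∈ s, 0 ≤ v i) (hw : ∀ i ∈ s, 0 ≤ w i)
    (hwv : ∀ i ∈ s, w i ≤ K * ∑ j ∈ s, v j) :
    ∑ i ∈ s, ENNReal.ofReal (w i ^ p) ≤
      ENNReal.ofReal (s.card * (K * s.card) ^ p) * ∑ i ∈ s, ENNReal.ofReal (v i ^ p) := by
  rcases s.eq_empty_or_nonempty with rfl | hs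
  · simp
  obtain ⟨k, hk, hmax⟩ := s.exists_max_image v hs
  have hvk : 0 ≤ v k := hv k hk
  have hsum : ∑ j ∈ s, v j ≤ s.card * v k := by
    simpa only [nsmul_eq_mul] using s.sum_le_card_nsmul v (v k) hmax
  have hterm : ∀ i ∈ s, w i ^ p ≤ (K * s.card) ^ p * v k ^ p := fun i hi =>
    calc w i ^ p ≤ (K * s.card * v k) ^ p := by
          refine Real.rpow_le_rpow (hw i hi) ((hwv i hi).trans ?_) hp
          rw [mul_assoc]
          gcongr
      _ = (K * s.card) ^ p * v k ^ p := Real.mul_rpow (by positivity) hvk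
  calc ∑ i ∈ s, ENNReal.ofReal (w i ^ p)
      ≤ s.card • ENNReal.ofReal ((K * s.card) ^ p * v k ^ p) :=
        s.sum_le_card_nsmul _ _ fun i hi => ENNReal.ofReal_le_ofReal (hterm i hi)
    _ = ENNReal.ofReal (s.card * (K * s.card) ^ p) * ENNReal.ofReal (v k ^ p) := by
        rw [← ENNReal.ofReal_nsmul, ← ENNReal.ofReal_mul (by positivity), nsmul_eq_mul, mul_assoc]
    _ ≤ _ := by
        gcongr
        exact Finset.single_le_sum (f := fun i => ENNReal.ofReal (v i ^ p))
          (fun _ _ => zero_le) hk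

lemma rpow_le_rpow_abs_mul_rpow {s r κ : ℝ} (hs : 0 < s) (hr : 0 < r) (hsr : s ≤ κ * r)
    (hrs : r ≤ κ * s) (e : ℝ) : s ^ e ≤ κ ^ |e| * r ^ e := by
  have hκ : 0 < κ := pos_of_mul_pos_left (hs.trans_le hsr) hr.le
  rcases le_total 0 e with he | he
  · rw [abs_of_nonneg he, ← Real.mul_rpow hκ.le hr.le]
    exact Real.rpow_le_rpow hs.le hsr he
  · calc s ^ e ≤ (r / κ) ^ e :=
          Real.rpow_le_rpow_of_nonpos (by positivity) ((div_le_iff₀' hκ).2 hrs) he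
      _ = κ ^ |e| * r ^ e := by
          rw [Real.div_rpow hr.le hκ.le, abs_of_nonpos he, Real.rpow_neg hκ.le, div_eq_inv_mul]

lemma exists_one_le_mul_of_hasSum_one {ι : Type*} {f : ι → ℝ} {N : ℕ} (hf : HasSum f 1)
    (hN : (Function.support f).encard ≤ N) : ∃ i, 1 ≤ N * f i := by
  obtain ⟨hfin, hcard⟩ := encard_le_coe_iff_finite_ncard_le.1 hN
  have hsum : ∑ i ∈ hfin.toFinset, f i = 1 :=
    (hasSum_sum_of_ne_finset_zero fun i hi => by simpa using hi).unique hf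
  have hne : hfin.toFinset.Nonempty := Finset.nonempty_of_sum_ne_zero (hsum ▸ one_ne_zero)
  obtain ⟨i, -, hi⟩ := Finset.exists_le_of_sum_le (f := fun _ => (1 : ℝ)) (g := fun i => N * f i)
    hne (by
      rw [← Finset.mul_sum, hsum, Finset.sum_const, nsmul_eq_mul,
        ← ncard_eq_toFinset_card _ hfin]
      exact_mod_cast Nat.mul_le_mul_right 1 hcard)
  exact ⟨i, hi⟩

lemma tsum_setLIntegral_le_of_encard_le {X ι : Type*} [MeasurableSpace X] [Countable ι]
    {μ : Measure X} {D : Set X} (hD : MeasurableSet D) {T : ι → Set X}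
    (hT : ∀ i, MeasurableSet (T i)) {N : ℕ} (hN : ∀ x ∈ D, {i | x ∈ T i}.encard ≤ N)
    {f : ι → X → ℝ≥0∞} (hf : ∀ i, AEMeasurable (f i) (μ.restrict D)) {g : X → ℝ≥0∞}
    (hfg : ∀ i, ∀ x ∈ D ∩ T i, f i x ≤ g x) :
    ∑' i, ∫⁻ x in T i ∩ D, f i x ∂μ ≤ N * ∫⁻ x in D, g x ∂μ := by
  have hpoint : ∀ x ∈ D, ∑' i, (T i).indicator (f i) x ≤ N * g x := fun x hx =>
    calc ∑' i, (T i).indicator (f i) x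
        = ∑' i : {i | x ∈ T i}, f i x :=
          (tsum_subtype {i | x ∈ T i} fun i => f i x).symm
      _ ≤ ∑' _ : {i | x ∈ T i}, g x := ENNReal.tsum_le_tsum fun i => hfg i x ⟨hx, i.2⟩
      _ = {i | x ∈ T i}.encard * g x := ENNReal.tsum_const _
      _ ≤ N * g x := by
          gcongr
          exact_mod_cast ENat.toENNReal_le.2 (hN x hx)
  calc ∑' i, ∫⁻ x in T i ∩ D, f i x ∂μ
      = ∑' i, ∫⁻ x in D, (T i).indicator (f i) x ∂μ :=
        tsum_congr fun i => (setLIntegral_indicator (hT i) (f i)).symm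
    _ = ∫⁻ x in D, ∑' i, (T i).indicator (f i) x ∂μ :=
        (lintegral_tsum fun i => (hf i).indicator (hT i)).symm
    _ ≤ ∫⁻ x in D, N * g x ∂μ := setLIntegral_mono' hD hpoint
    _ = N * ∫⁻ x in D, g x ∂μ := lintegral_const_mul' _ _ (ENNReal.natCast_ne_top N)

section Density

variable {E F : Type*} [NormedAddCommGroup E] [NormedSpace ℝ E] [NormedAddCommGroup F]
  [NormedSpace ℝ F]

/-- The order-`n` contribution `r ^ (n - a) ‖Dⁿ u(x)‖` to the Kondratiev norm at `x`, with weight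
value `r`. The weight enters as a number so that it can be replaced by a comparable constant. -/
noncomputable def weightedDerivNorm (a r : ℝ) (n : ℕ) (u : E → F) (x : E) : ℝ :=
  r ^ ((n : ℝ) - a) * ‖iteratedFDeriv ℝ n u x‖

/-- The integrand `∑_{n ≤ m} |r ^ (n - a) Dⁿ u(x)| ^ p` of the Kondratiev norm at `x`, with weight
value `r`. -/
noncomputable def kondratievDensity (m : ℕ) (a p r : ℝ) (u : E → F) (x : E) : ℝ≥0∞ :=
  ∑ n ∈ Finset.range (m + 1), ENNReal.ofReal (weightedDerivNorm a r n u x ^ p)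

lemma weightedDerivNorm_nonneg (a : ℝ) {r : ℝ} (hr : 0 ≤ r) (n : ℕ) (u : E → F) (x : E) :
    0 ≤ weightedDerivNorm a r n u x := by
  unfold weightedDerivNorm
  positivity

lemma ofReal_weightedDerivNorm_rpow_le_kondratievDensity {m n : ℕ} (hn : n ≤ m) (a p r : ℝ)
    (u : E → F) (x : E) :
    ENNReal.ofReal (weightedDerivNorm a r n u x ^ p) ≤ kondratievDensity m a p r u x :=
  Finset.single_le_sum (f := fun n => ENNReal.ofReal (weightedDerivNorm a r n u x ^ p))
    (fun _ _ => zero_le) (Finset.mem_range_succ_iff.2 hn)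

lemma weightedDerivNorm_of_notMem_tsupport (a r : ℝ) (n : ℕ) {u : E → F} {x : E}
    (hx : x ∉ tsupport u) : weightedDerivNorm a r n u x = 0 := by
  have hD : iteratedFDeriv ℝ n u x = 0 :=
    Function.notMem_support.1 fun h => hx (support_iteratedFDeriv_subset n h)
  rw [weightedDerivNorm, hD, norm_zero, mul_zero]

lemma kondratievDensity_of_notMem_tsupport (m : ℕ) (a : ℝ) {p : ℝ} (hp : 0 < p) (r : ℝ)
    {u : E → F} {x : E} (hx : x ∉ tsupport u) : kondratievDensity m a p r u x = 0 := by
  simp [kondratievDensity, weightedDerivNorm_of_notMem_tsupport a r _ hx, Real.zero_rpow hp.ne']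

lemma exists_ofReal_weightedDerivNorm_rpow_le (m : ℕ) (a : ℝ) {p : ℝ} (hp : 0 ≤ p) (κ : ℝ) :
    ∃ C : ℝ≥0, ∀ {r s : ℝ}, 0 < r → 0 < s → s ≤ κ * r → r ≤ κ * s →
      ∀ n ≤ m, ∀ (u : E → F) (x : E),
        ENNReal.ofReal (weightedDerivNorm a s n u x ^ p) ≤
          C * ENNReal.ofReal (weightedDerivNorm a r n u x ^ p) := by
  refine ⟨(Finset.range (m + 1)).sup fun n => Real.toNNReal ((κ ^ |(n : ℝ) - a|) ^ p), ?_⟩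
  intro r s hr hs hsr hrs n hn u x
  have hκ : 0 < κ := pos_of_mul_pos_left (hs.trans_le hsr) hr.le
  have hle : weightedDerivNorm a s n u x ≤
      κ ^ |(n : ℝ) - a| * weightedDerivNorm a r n u x := by
    unfold weightedDerivNorm
    rw [← mul_assoc]
    gcongr
    exact rpow_le_rpow_abs_mul_rpow hs hr hsr hrs _
  calc ENNReal.ofReal (weightedDerivNorm a s n u x ^ p)
      ≤ ENNReal.ofReal ((κ ^ |(n : ℝ) - a| * weightedDerivNorm a r n u x) ^ p) :=
        ENNReal.ofReal_le_ofReal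
          (Real.rpow_le_rpow (weightedDerivNorm_nonneg a hs.le n u x) hle hp)
    _ = ENNReal.ofReal ((κ ^ |(n : ℝ) - a|) ^ p) *
          ENNReal.ofReal (weightedDerivNorm a r n u x ^ p) := by
        rw [Real.mul_rpow (by positivity) (weightedDerivNorm_nonneg a hr.le n u x),
          ENNReal.ofReal_mul (by positivity)]
    _ ≤ _ := by
        gcongr
        exact ENNReal.coe_le_coe.2 (Finset.le_sup
          (f := fun n : ℕ => Real.toNNReal ((κ ^ |(n : ℝ) - a|) ^ p))
          (Finset.mem_range_succ_iff.2 hn))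

lemma weightedDerivNorm_smul_le_sum {ψ : E → ℝ} {u : E → F} {x : E} {n : ℕ} {r : ℝ} (hr : 0 < r)
    (hψ : ContDiffAt ℝ n ψ x) (hu : ContDiffAt ℝ n u x) (a : ℝ) :
    weightedDerivNorm a r n (fun y => ψ y • u y) x ≤ ∑ i ∈ Finset.range (n + 1),
      (n.choose i : ℝ) * (‖iteratedFDeriv ℝ i ψ x‖ * r ^ i) *
        weightedDerivNorm a r (n - i) u x := by
  have hsplit : ∀ i ≤ n, r ^ ((n : ℝ) - a) = r ^ i * r ^ (((n - i : ℕ) : ℝ) - a) := fun i hi => by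
    rw [← Real.rpow_natCast, ← Real.rpow_add hr, Nat.cast_sub hi]
    ring_nf
  calc weightedDerivNorm a r n (fun y => ψ y • u y) x
      ≤ r ^ ((n : ℝ) - a) * ∑ i ∈ Finset.range (n + 1),
          (n.choose i : ℝ) * ‖iteratedFDeriv ℝ i ψ x‖ * ‖iteratedFDeriv ℝ (n - i) u x‖ := by
        unfold weightedDerivNorm
        gcongr
        exact norm_iteratedFDeriv_smul_le_of_contDiffAt hψ hu
    _ = _ := by
        rw [Finset.mul_sum]
        refine Finset.sum_congr rfl fun i hi => ?_
        rw [hsplit i (Finset.mem_range_succ_iff.1 hi), weightedDerivNorm]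
        ring

lemma weightedDerivNorm_smul_le {ψ : E → ℝ} {u : E → F} {x : E} {m n : ℕ} {a r M : ℝ} (hn : n ≤ m)
    (hr : 0 < r) (hψ : ContDiffAt ℝ m ψ x) (hu : ContDiffAt ℝ m u x)
    (hM : ∀ k ≤ m, ‖iteratedFDeriv ℝ k ψ x‖ * r ^ k ≤ M) :
    weightedDerivNorm a r n (fun y => ψ y • u y) x ≤
      2 ^ m * M * ∑ k ∈ Finset.range (m + 1), weightedDerivNorm a r k u x := by
  set J := ∑ k ∈ Finset.range (m + 1), weightedDerivNorm a r k u x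
  have hJ : ∀ k ≤ m, weightedDerivNorm a r k u x ≤ J := fun k hk =>
    Finset.single_le_sum (f := fun k => weightedDerivNorm a r k u x)
      (fun k _ => weightedDerivNorm_nonneg a hr.le k u x) (Finset.mem_range_succ_iff.2 hk)
  have hJ₀ : 0 ≤ J := (weightedDerivNorm_nonneg a hr.le n u x).trans (hJ n hn)
  have hM₀ : 0 ≤ M := le_trans (by positivity) (hM n hn)
  have hnm : (n : WithTop ℕ∞) ≤ m := by exact_mod_cast hn
  calc weightedDerivNorm a r n (fun y => ψ y • u y) x
      ≤ ∑ i ∈ Finset.range (n + 1), (n.choose i : ℝ) *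
          (‖iteratedFDeriv ℝ i ψ x‖ * r ^ i) * weightedDerivNorm a r (n - i) u x :=
        weightedDerivNorm_smul_le_sum hr (hψ.of_le hnm) (hu.of_le hnm) a
    _ ≤ ∑ i ∈ Finset.range (n + 1), (n.choose i : ℝ) * M * J := by
        refine Finset.sum_le_sum fun i hi => ?_
        have hin : i ≤ n := Finset.mem_range_succ_iff.1 hi
        gcongr
        · exact weightedDerivNorm_nonneg a hr.le _ u x
        · exact hM i (hin.trans hn)
        · exact hJ _ ((n.sub_le i).trans hn)
    _ = 2 ^ n * M * J := by
        rw [← Finset.sum_mul, ← Finset.sum_mul]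
        exact_mod_cast congrArg (fun k : ℕ => (k : ℝ) * M * J) (Nat.sum_range_choose n)
    _ ≤ 2 ^ m * M * J := by
        gcongr
        exact one_le_two

lemma exists_kondratievDensity_smul_le (m : ℕ) (a : ℝ) {p : ℝ} (hp : 0 ≤ p) (M : ℝ) :
    ∃ C : ℝ≥0, ∀ {r : ℝ}, 0 < r → ∀ {ψ : E → ℝ} {u : E → F} {x : E},
      ContDiffAt ℝ m ψ x → ContDiffAt ℝ m u x →
      (∀ k ≤ m, ‖iteratedFDeriv ℝ k ψ x‖ * r ^ k ≤ M) →
      kondratievDensity m a p r (fun y => ψ y • u y) x ≤ C * kondratievDensity m a p r u x := by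
  refine ⟨Real.toNNReal ((Finset.range (m + 1)).card *
    (2 ^ m * M * (Finset.range (m + 1)).card) ^ p), fun {r} hr {ψ u x} hψ hu hM => ?_⟩
  have hM₀ : 0 ≤ M := le_trans (by positivity) (hM 0 m.zero_le)
  exact sum_ofReal_rpow_le_of_forall_le_sum _ (by positivity) hp
    (fun k _ => weightedDerivNorm_nonneg a hr.le k u x)
    (fun k _ => weightedDerivNorm_nonneg a hr.le k _ x)
    fun k hk => weightedDerivNorm_smul_le (Finset.mem_range_succ_iff.1 hk) hr hψ hu hM

lemma norm_iteratedFDeriv_inv_comp_mul_pow_le {ψ : E → ℝ} {x : E} {m n : ℕ} {r K M : ℝ}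
    (hn : n ≤ m) (hr : 0 < r) (hψ : ContDiffAt ℝ m ψ x) (hK : 1 ≤ K) (hψx : 1 ≤ K * |ψ x|)
    (hM : 1 ≤ M) (hψM : ∀ k ≤ m, ‖iteratedFDeriv ℝ k ψ x‖ * r ^ k ≤ M) :
    ‖iteratedFDeriv ℝ n (fun y => (ψ y)⁻¹) x‖ * r ^ n ≤
      m.factorial * (m.factorial * K ^ (m + 1)) * M ^ m := by
  have hB : ∀ i, 1 ≤ i → i ≤ n → ‖iteratedFDeriv ℝ i ψ x‖ ≤ (M / r) ^ i := fun i hi₁ hi => by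
    rw [div_pow, le_div_iff₀ (by positivity)]
    exact (hψM i (hi.trans hn)).trans (le_self_pow₀ hM (Nat.one_le_iff_ne_zero.1 hi₁))
  have hψn : ContDiffAt ℝ n ψ x := hψ.of_le (by exact_mod_cast hn)
  calc ‖iteratedFDeriv ℝ n (fun y => (ψ y)⁻¹) x‖ * r ^ n
      ≤ n.factorial * (n.factorial * K ^ (n + 1)) * (M / r) ^ n * r ^ n := by
        gcongr
        exact norm_iteratedFDeriv_inv_comp_le hψn hK hψx hB
    _ = n.factorial * (n.factorial * K ^ (n + 1)) * M ^ n := by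
        rw [mul_assoc, ← mul_pow, div_mul_cancel₀ _ hr.ne']
    _ ≤ m.factorial * (m.factorial * K ^ (m + 1)) * M ^ m := by gcongr

lemma exists_kondratievDensity_le_smul (m : ℕ) (a : ℝ) {p : ℝ} (hp : 0 ≤ p) (K M : ℝ) :
    ∃ C : ℝ≥0, ∀ {r : ℝ}, 0 < r → ∀ {ψ : E → ℝ} {u : E → F} {x : E},
      ContDiffAt ℝ m ψ x → ContDiffAt ℝ m u x → 1 ≤ K * |ψ x| →
      (∀ k ≤ m, ‖iteratedFDeriv ℝ k ψ x‖ * r ^ k ≤ M) →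
      kondratievDensity m a p r u x ≤ C * kondratievDensity m a p r (fun y => ψ y • u y) x := by
  obtain ⟨C, hC⟩ := exists_kondratievDensity_smul_le (E := E) (F := F) m a hp
    (m.factorial * (m.factorial * (max 1 K) ^ (m + 1)) * (max 1 M) ^ m)
  refine ⟨C, fun {r} hr {ψ u x} hψ hu hψx hM => ?_⟩
  have hψ₀ : ψ x ≠ 0 := by
    intro h
    norm_num [h] at hψx
  have hcancel : (fun y => (ψ y)⁻¹ • ψ y • u y) =ᶠ[𝓝 x] u := by
    filter_upwards [hψ.continuousAt.eventually_ne hψ₀] with y hy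
    exact inv_smul_smul₀ hy _
  have hdensity : kondratievDensity m a p r u x =
      kondratievDensity m a p r (fun y => (ψ y)⁻¹ • ψ y • u y) x := by
    simp only [kondratievDensity, weightedDerivNorm, (hcancel.iteratedFDeriv ℝ _).eq_of_nhds]
  rw [hdensity]
  refine hC hr (hψ.inv hψ₀) (hψ.smul hu) fun k hk => ?_
  exact norm_iteratedFDeriv_inv_comp_mul_pow_le hk hr hψ (le_max_left 1 K)
    (hψx.trans (by gcongr; exact le_max_right 1 K)) (le_max_left 1 M)
    fun j hj => (hM j hj).trans (le_max_right 1 M)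

end Density

section WhitneyResolution

variable {E F ι : Type*} [NormedAddCommGroup E] [NormedSpace ℝ E] [NormedAddCommGroup F]
  [NormedSpace ℝ F]

/-- A `C^m` resolution of unity `φ` on `D` subordinate to a Whitney decomposition. The cubes enter
only through their side lengths `r i`: on the support of `φ i` the weight `ρ` is comparable to
`r i` with constant `κ`, and the derivatives of `φ i` scale like inverse powers of `r i`. -/
structure IsWhitneyResolution (D : Set E) (ρ : E → ℝ) (r : ι → ℝ) (φ : ι → E → ℝ) (m N : ℕ)
    (κ M : ℝ) : Prop where
  weight_pos : ∀ x ∈ D, 0 < ρ x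
  scale_pos : ∀ i, 0 < r i
  weight_le : ∀ i, ∀ x ∈ D ∩ tsupport (φ i), ρ x ≤ κ * r i
  scale_le : ∀ i, ∀ x ∈ D ∩ tsupport (φ i), r i ≤ κ * ρ x
  contDiffOn : ∀ i, ContDiffOn ℝ m (φ i) D
  norm_iteratedFDeriv_mul_pow_le : ∀ i, ∀ x ∈ D, ∀ n ≤ m,
    ‖iteratedFDeriv ℝ n (φ i) x‖ * r i ^ n ≤ M
  hasSum_one : ∀ x ∈ D, HasSum (fun i => φ i x) 1
  encard_le : ∀ x ∈ D, {i | x ∈ tsupport (φ i)}.encard ≤ N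

namespace IsWhitneyResolution

variable {D : Set E} {ρ : E → ℝ} {r : ι → ℝ} {φ : ι → E → ℝ} {m N : ℕ} {κ M : ℝ}

lemma exists_one_le_mul (h : IsWhitneyResolution D ρ r φ m N κ M) {x : E} (hx : x ∈ D) :
    ∃ i, x ∈ tsupport (φ i) ∧ 1 ≤ N * |φ i x| := by
  have hsupport : Function.support (fun i => φ i x) ⊆ {i | x ∈ tsupport (φ i)} :=
    fun i hi => subset_tsupport (φ i) hi
  obtain ⟨i, hi⟩ := exists_one_le_mul_of_hasSum_one (h.hasSum_one x hx)
    ((encard_le_encard hsupport).trans (h.encard_le x hx))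
  have hi₀ : φ i x ≠ 0 := by
    intro hi₀
    norm_num [hi₀] at hi
  exact ⟨i, subset_tsupport (φ i) hi₀, hi.trans (by gcongr; exact le_abs_self _)⟩

lemma exists_kondratievDensity_le_tsum (h : IsWhitneyResolution D ρ r φ m N κ M) (hD : IsOpen D)
    (a : ℝ) {p : ℝ} (hp : 0 ≤ p) :
    ∃ C : ℝ≥0, ∀ u : E → F, ContDiffOn ℝ m u D → ∀ x ∈ D,
      kondratievDensity m a p (ρ x) u x ≤
        C * ∑' i, kondratievDensity m a p (r i) (fun y => φ i y • u y) x := by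
  obtain ⟨C, hC⟩ := exists_ofReal_weightedDerivNorm_rpow_le (E := E) (F := F) m a hp κ
  obtain ⟨C', hC'⟩ := exists_kondratievDensity_le_smul (E := E) (F := F) m a hp N M
  refine ⟨C * C', fun u hu x hx => ?_⟩
  obtain ⟨i, hxi, hi⟩ := h.exists_one_le_mul hx
  have hφx : ContDiffAt ℝ m (φ i) x := (h.contDiffOn i).contDiffAt (hD.mem_nhds hx)
  have hux : ContDiffAt ℝ m u x := hu.contDiffAt (hD.mem_nhds hx)
  calc kondratievDensity m a p (ρ x) u x ≤ C * kondratievDensity m a p (r i) u x := by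
        unfold kondratievDensity
        rw [Finset.mul_sum]
        exact Finset.sum_le_sum fun n hn => hC (h.scale_pos i) (h.weight_pos x hx)
          (h.weight_le i x ⟨hx, hxi⟩) (h.scale_le i x ⟨hx, hxi⟩) n
          (Finset.mem_range_succ_iff.1 hn) u x
    _ ≤ C * (C' * kondratievDensity m a p (r i) (fun y => φ i y • u y) x) := by
        gcongr
        exact hC' (h.scale_pos i) hφx hux hi (h.norm_iteratedFDeriv_mul_pow_le i x hx)
    _ ≤ C * (C' * ∑' i, kondratievDensity m a p (r i) (fun y => φ i y • u y) x) := by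
        gcongr
        exact ENNReal.le_tsum (f := fun i => kondratievDensity m a p (r i)
          (fun y => φ i y • u y) x) i
    _ = _ := by rw [ENNReal.coe_mul, mul_assoc]

end IsWhitneyResolution

lemma exists_isWhitneyResolution_dyadic {D : Set E} {ρ : E → ℝ} (hρ : ∀ x ∈ D, 0 < ρ x)
    {lvl : ι → ℕ} {φ : ι → E → ℝ} {m N : ℕ} {c₁ c₂ : ℝ} (hφ : ∀ i, ContDiffOn ℝ m (φ i) D)
    (hsum : ∀ x ∈ D, HasSum (fun i => φ i x) 1)
    (hder : ∀ n ≤ m, ∃ c : ℝ, ∀ i, ∀ x ∈ D,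
      ‖iteratedFDeriv ℝ n (φ i) x‖ ≤ c * (2 : ℝ) ^ (lvl i * n))
    (hoverlap : ∀ x ∈ D, {i | x ∈ tsupport (φ i)}.encard ≤ N) (hc₁ : 0 < c₁)
    (hρloc : ∀ i, ∀ x ∈ tsupport (φ i) ∩ D,
      c₁ * (2 : ℝ) ^ (-(lvl i : ℤ)) ≤ ρ x ∧ ρ x ≤ c₂ * (2 : ℝ) ^ (-(lvl i : ℤ))) :
    ∃ M, IsWhitneyResolution D ρ (fun i => (2 : ℝ) ^ (-(lvl i : ℤ))) φ m N (max c₂ c₁⁻¹) M := by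
  choose! c hc using hder
  obtain ⟨M, hM⟩ := ((finite_Iic m).image c).bddAbove
  refine ⟨M, hρ, fun i => by positivity, fun i x hx => ?_, fun i x hx => ?_, hφ,
    fun i x hx n hn => ?_, hsum, hoverlap⟩
  · exact (hρloc i x hx.symm).2.trans (by gcongr; exact le_max_left _ _)
  · have hρx : 0 < ρ x := hρ x hx.1
    calc (2 : ℝ) ^ (-(lvl i : ℤ)) ≤ c₁⁻¹ * ρ x := (le_inv_mul_iff₀ hc₁).2 (hρloc i x hx.symm).1
      _ ≤ max c₂ c₁⁻¹ * ρ x := by gcongr; exact le_max_right _ _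
  · calc ‖iteratedFDeriv ℝ n (φ i) x‖ * ((2 : ℝ) ^ (-(lvl i : ℤ))) ^ n
        ≤ c n * (2 : ℝ) ^ (lvl i * n) * ((2 : ℝ) ^ (-(lvl i : ℤ))) ^ n := by
          gcongr
          exact hc n hn i x hx
      _ = c n := by
          rw [zpow_neg, zpow_natCast, inv_pow, ← pow_mul, mul_inv_cancel_right₀ (by positivity)]
      _ ≤ M := hM (mem_image_of_mem c hn)

end WhitneyResolution

section WeightedSobolevNorm

variable {E F ι : Type*} [NormedAddCommGroup E] [NormedSpace ℝ E] [MeasurableSpace E]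
  [NormedAddCommGroup F] [NormedSpace ℝ F]

/-- The `p`-th power of the Kondratiev norm of `u` with respect to an arbitrary measure; the domain
is encoded by restricting the measure, so that `KondratievNormP D` is the case of
`volume.restrict D`. -/
noncomputable def weightedSobolevNormP (μ : Measure E) (ρ : E → ℝ) (m : ℕ) (a p : ℝ) (u : E → F) :
    ℝ≥0∞ :=
  ∑ n ∈ Finset.range (m + 1), ∫⁻ x, ENNReal.ofReal (weightedDerivNorm a (ρ x) n u x ^ p) ∂μ

lemma exists_weightedSobolevNormP_le_of_comparable (m : ℕ) (a : ℝ) {p : ℝ} (hp : 0 < p) (κ : ℝ) :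
    ∃ C : ℝ≥0, ∀ {μ : Measure E} {D : Set E}, MeasurableSet D → ∀ {ρ σ : E → ℝ} {u : E → F},
      (∀ x ∈ D ∩ tsupport u, 0 < σ x ∧ 0 < ρ x ∧ ρ x ≤ κ * σ x ∧ σ x ≤ κ * ρ x) →
      weightedSobolevNormP (μ.restrict D) ρ m a p u ≤
        C * weightedSobolevNormP (μ.restrict D) σ m a p u := by
  obtain ⟨C, hC⟩ := exists_ofReal_weightedDerivNorm_rpow_le (E := E) (F := F) m a hp.le κ
  refine ⟨C, fun {μ D} hD {ρ σ u} hρσ => ?_⟩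
  unfold weightedSobolevNormP
  rw [Finset.mul_sum]
  refine Finset.sum_le_sum fun n hn => ?_
  rw [← lintegral_const_mul' _ _ ENNReal.coe_ne_top]
  refine setLIntegral_mono' hD fun x hx => ?_
  by_cases hxu : x ∈ tsupport u
  · obtain ⟨hσ, hρ, hρσx, hσρx⟩ := hρσ x ⟨hx, hxu⟩
    exact hC hσ hρ hρσx hσρx n (Finset.mem_range_succ_iff.1 hn) u x
  · simp [weightedDerivNorm_of_notMem_tsupport _ _ n hxu, Real.zero_rpow hp.ne']

lemma weightedSobolevNormP_le_mul_lintegral (μ : Measure E) {D : Set E} (hD : MeasurableSet D)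
    {ρ : E → ℝ} {m : ℕ} {a p : ℝ} {u : E → F} {C : ℝ≥0} {g : E → ℝ≥0∞}
    (hg : ∀ x ∈ D, kondratievDensity m a p (ρ x) u x ≤ C * g x) :
    weightedSobolevNormP (μ.restrict D) ρ m a p u ≤ (m + 1) * C * ∫⁻ x in D, g x ∂μ := by
  have hterm : ∀ n ∈ Finset.range (m + 1),
      ∫⁻ x in D, ENNReal.ofReal (weightedDerivNorm a (ρ x) n u x ^ p) ∂μ ≤
        C * ∫⁻ x in D, g x ∂μ := fun n hn => by
    rw [← lintegral_const_mul' _ _ ENNReal.coe_ne_top]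
    exact setLIntegral_mono' hD fun x hx =>
      (ofReal_weightedDerivNorm_rpow_le_kondratievDensity
        (Finset.mem_range_succ_iff.1 hn) a p (ρ x) u x).trans (hg x hx)
  calc weightedSobolevNormP (μ.restrict D) ρ m a p u
      ≤ (Finset.range (m + 1)).card • (C * ∫⁻ x in D, g x ∂μ) :=
        Finset.sum_le_card_nsmul _ _ _ hterm
    _ = (m + 1) * C * ∫⁻ x in D, g x ∂μ := by
        rw [Finset.card_range, nsmul_eq_mul, Nat.cast_succ, mul_assoc]

section Measurability

variable [BorelSpace E] {U : Set E} {u : E → F} {m : ℕ}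

lemma aemeasurable_ofReal_weightedDerivNorm_rpow (μ : Measure E) (hU : IsOpen U)
    (hu : ContDiffOn ℝ m u U) (a p r : ℝ) {n : ℕ} (hn : n ≤ m) :
    AEMeasurable (fun x => ENNReal.ofReal (weightedDerivNorm a r n u x ^ p)) (μ.restrict U) := by
  have hcont : ContinuousOn (fun x => ‖iteratedFDeriv ℝ n u x‖) U :=
    (ContinuousOn.continuousOn_iteratedFDeriv hu hU (by exact_mod_cast hn)).norm
  exact (((hcont.aemeasurable hU.measurableSet).const_mul _).pow_const p).ennreal_ofReal

lemma aemeasurable_kondratievDensity (μ : Measure E) (hU : IsOpen U) (hu : ContDiffOn ℝ m u U)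
    (a p r : ℝ) : AEMeasurable (kondratievDensity m a p r u) (μ.restrict U) :=
  Finset.aemeasurable_fun_sum _ fun _ hn =>
    aemeasurable_ofReal_weightedDerivNorm_rpow μ hU hu a p r (Finset.mem_range_succ_iff.1 hn)

lemma setLIntegral_kondratievDensity (μ : Measure E) (hU : IsOpen U) (hu : ContDiffOn ℝ m u U)
    {V : Set E} (hVU : V ⊆ U) (a p r : ℝ) :
    ∫⁻ x in V, kondratievDensity m a p r u x ∂μ =
      weightedSobolevNormP (μ.restrict V) (fun _ => r) m a p u :=
  lintegral_finsetSum' _ fun _ hn =>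
    (aemeasurable_ofReal_weightedDerivNorm_rpow μ hU hu a p r
      (Finset.mem_range_succ_iff.1 hn)).mono_set hVU

end Measurability

namespace IsWhitneyResolution

variable [BorelSpace E] {D : Set E} {ρ : E → ℝ} {r : ι → ℝ} {φ : ι → E → ℝ} {m N : ℕ} {κ M : ℝ}

theorem exists_weightedSobolevNormP_le_tsum [Countable ι]
    (h : IsWhitneyResolution D ρ r φ m N κ M) (μ : Measure E) (hD : IsOpen D) (a : ℝ) {p : ℝ}
    (hp : 0 < p) :
    ∃ C : ℝ≥0, ∀ u : E → F, ContDiffOn ℝ m u D →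
      weightedSobolevNormP (μ.restrict D) ρ m a p u ≤
        C * ∑' i, weightedSobolevNormP (μ.restrict D) ρ m a p (fun x => φ i x • u x) := by
  obtain ⟨C, hC⟩ := h.exists_kondratievDensity_le_tsum (F := F) hD a hp.le
  obtain ⟨C', hC'⟩ := exists_weightedSobolevNormP_le_of_comparable (E := E) (F := F) m a hp κ
  refine ⟨(m + 1) * C * C', fun u hu => ?_⟩
  have hφu : ∀ i, ContDiffOn ℝ m (fun x => φ i x • u x) D := fun i => (h.contDiffOn i).smul hu
  have hscale : ∀ i, ∀ x ∈ D ∩ tsupport (fun x => φ i x • u x),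
      0 < ρ x ∧ 0 < r i ∧ r i ≤ κ * ρ x ∧ ρ x ≤ κ * r i := fun i x hx =>
    have hxi : x ∈ D ∩ tsupport (φ i) := ⟨hx.1, tsupport_smul_subset_left _ _ hx.2⟩
    ⟨h.weight_pos x hx.1, h.scale_pos i, h.scale_le i x hxi, h.weight_le i x hxi⟩
  calc weightedSobolevNormP (μ.restrict D) ρ m a p u
      ≤ (m + 1) * C *
          ∫⁻ x in D, ∑' i, kondratievDensity m a p (r i) (fun y => φ i y • u y) x ∂μ :=
        weightedSobolevNormP_le_mul_lintegral μ hD.measurableSet (hC u hu)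
    _ = (m + 1) * C *
          ∑' i, weightedSobolevNormP (μ.restrict D) (fun _ => r i) m a p
            (fun x => φ i x • u x) := by
        rw [lintegral_tsum fun i => aemeasurable_kondratievDensity μ hD (hφu i) a p (r i)]
        simp_rw [setLIntegral_kondratievDensity μ hD (hφu _) Subset.rfl]
    _ ≤ (m + 1) * C *
          ∑' i, C' * weightedSobolevNormP (μ.restrict D) ρ m a p (fun x => φ i x • u x) := by
        gcongr with i
        exact hC' hD.measurableSet (hscale i)
    _ = _ := by
        rw [ENNReal.tsum_mul_left, ← mul_assoc]
        push_cast
        rfl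

lemma exists_weightedSobolevNormP_smul_le (h : IsWhitneyResolution D ρ r φ m N κ M)
    (μ : Measure E) (hD : IsOpen D) (a : ℝ) {p : ℝ} (hp : 0 < p) :
    ∃ C : ℝ≥0, ∀ u : E → F, ContDiffOn ℝ m u D → ∀ i,
      weightedSobolevNormP (μ.restrict D) ρ m a p (fun x => φ i x • u x) ≤
        C * weightedSobolevNormP (μ.restrict (tsupport (φ i) ∩ D)) (fun _ => r i) m a p u := by
  obtain ⟨C, hC⟩ := exists_weightedSobolevNormP_le_of_comparable (E := E) (F := F) m a hp κ
  obtain ⟨C', hC'⟩ := exists_kondratievDensity_smul_le (E := E) (F := F) m a hp.le M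
  refine ⟨C * C', fun u hu i => ?_⟩
  have hφu : ContDiffOn ℝ m (fun x => φ i x • u x) D := (h.contDiffOn i).smul hu
  have hscale : ∀ x ∈ D ∩ tsupport (fun x => φ i x • u x),
      0 < r i ∧ 0 < ρ x ∧ ρ x ≤ κ * r i ∧ r i ≤ κ * ρ x := fun x hx =>
    have hxi : x ∈ D ∩ tsupport (φ i) := ⟨hx.1, tsupport_smul_subset_left _ _ hx.2⟩
    ⟨h.scale_pos i, h.weight_pos x hx.1, h.weight_le i x hxi, h.scale_le i x hxi⟩
  have hlocal : ∀ x ∈ D, kondratievDensity m a p (r i) (fun y => φ i y • u y) x ≤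
      (tsupport (φ i)).indicator (fun x => C' * kondratievDensity m a p (r i) u x) x := by
    intro x hx
    by_cases hxi : x ∈ tsupport (φ i)
    · rw [indicator_of_mem hxi]
      exact hC' (h.scale_pos i) ((h.contDiffOn i).contDiffAt (hD.mem_nhds hx))
        (hu.contDiffAt (hD.mem_nhds hx)) (h.norm_iteratedFDeriv_mul_pow_le i x hx)
    · rw [kondratievDensity_of_notMem_tsupport m a hp (r i)
        fun hxu => hxi (tsupport_smul_subset_left _ _ hxu)]
      exact zero_le
  calc weightedSobolevNormP (μ.restrict D) ρ m a p (fun x => φ i x • u x)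
      ≤ C * weightedSobolevNormP (μ.restrict D) (fun _ => r i) m a p (fun x => φ i x • u x) :=
        hC hD.measurableSet hscale
    _ = C * ∫⁻ x in D, kondratievDensity m a p (r i) (fun y => φ i y • u y) x ∂μ := by
        rw [setLIntegral_kondratievDensity μ hD hφu Subset.rfl]
    _ ≤ C * ∫⁻ x in tsupport (φ i) ∩ D, C' * kondratievDensity m a p (r i) u x ∂μ := by
        rw [← setLIntegral_indicator (isClosed_tsupport _).measurableSet]
        gcongr C * ?_
        exact setLIntegral_mono' hD.measurableSet hlocal
    _ = _ := by
        rw [lintegral_const_mul' _ _ ENNReal.coe_ne_top,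
          setLIntegral_kondratievDensity μ hD hu inter_subset_right, ENNReal.coe_mul, mul_assoc]

lemma exists_tsum_weightedSobolevNormP_restrict_le [Countable ι]
    (h : IsWhitneyResolution D ρ r φ m N κ M) (μ : Measure E) (hD : IsOpen D) (a : ℝ) {p : ℝ}
    (hp : 0 ≤ p) :
    ∃ C : ℝ≥0, ∀ u : E → F, ContDiffOn ℝ m u D →
      ∑' i, weightedSobolevNormP (μ.restrict (tsupport (φ i) ∩ D)) (fun _ => r i) m a p u ≤
        C * weightedSobolevNormP (μ.restrict D) ρ m a p u := by
  obtain ⟨C, hC⟩ := exists_ofReal_weightedDerivNorm_rpow_le (E := E) (F := F) m a hp κ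
  refine ⟨N * C, fun u hu => ?_⟩
  unfold weightedSobolevNormP
  rw [Summable.tsum_finsetSum fun _ _ => ENNReal.summable, Finset.mul_sum]
  refine Finset.sum_le_sum fun n hn => ?_
  have hnm : n ≤ m := Finset.mem_range_succ_iff.1 hn
  calc ∑' i, ∫⁻ x in tsupport (φ i) ∩ D, ENNReal.ofReal (weightedDerivNorm a (r i) n u x ^ p) ∂μ
      ≤ N * ∫⁻ x in D, C * ENNReal.ofReal (weightedDerivNorm a (ρ x) n u x ^ p) ∂μ :=
        tsum_setLIntegral_le_of_encard_le hD.measurableSet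
          (fun i => (isClosed_tsupport (φ i)).measurableSet) h.encard_le
          (fun i => aemeasurable_ofReal_weightedDerivNorm_rpow μ hD hu a p (r i) hnm)
          fun i x hx => hC (h.weight_pos x hx.1) (h.scale_pos i) (h.scale_le i x hx)
            (h.weight_le i x hx) n hnm u x
    _ = _ := by
        rw [lintegral_const_mul' _ _ ENNReal.coe_ne_top, ← mul_assoc]
        push_cast
        rfl

theorem exists_tsum_weightedSobolevNormP_le [Countable ι]
    (h : IsWhitneyResolution D ρ r φ m N κ M) (μ : Measure E) (hD : IsOpen D) (a : ℝ) {p : ℝ}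
    (hp : 0 < p) :
    ∃ C : ℝ≥0, ∀ u : E → F, ContDiffOn ℝ m u D →
      ∑' i, weightedSobolevNormP (μ.restrict D) ρ m a p (fun x => φ i x • u x) ≤
        C * weightedSobolevNormP (μ.restrict D) ρ m a p u := by
  obtain ⟨C, hC⟩ := h.exists_weightedSobolevNormP_smul_le (F := F) μ hD a hp
  obtain ⟨C', hC'⟩ := h.exists_tsum_weightedSobolevNormP_restrict_le (F := F) μ hD a hp.le
  refine ⟨C * C', fun u hu => ?_⟩
  calc ∑' i, weightedSobolevNormP (μ.restrict D) ρ m a p (fun x => φ i x • u x)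
      ≤ ∑' i, C * weightedSobolevNormP (μ.restrict (tsupport (φ i) ∩ D)) (fun _ => r i) m a p u :=
        ENNReal.tsum_le_tsum (hC u hu)
    _ ≤ C * (C' * weightedSobolevNormP (μ.restrict D) ρ m a p u) := by
        rw [ENNReal.tsum_mul_left]
        gcongr
        exact hC' u hu
    _ = _ := by rw [ENNReal.coe_mul, mul_assoc]

end IsWhitneyResolution

end WeightedSobolevNorm

theorem statement13_general {E F ι : Type*} [NormedAddCommGroup E] [NormedSpace ℝ E]
    [MeasurableSpace E] [BorelSpace E] [NormedAddCommGroup F] [NormedSpace ℝ F] [Countable ι]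
    {D : Set E} {ρ : E → ℝ} {r : ι → ℝ} {φ : ι → E → ℝ} {m N : ℕ} {κ M : ℝ}
    (h : IsWhitneyResolution D ρ r φ m N κ M) (μ : Measure E) (hD : IsOpen D) (a : ℝ) {p : ℝ}
    (hp : 0 < p) :
    ∃ A B : ℝ, 0 < A ∧ 0 < B ∧ ∀ u : E → F, ContDiffOn ℝ m u D →
      weightedSobolevNormP (μ.restrict D) ρ m a p u ≤
        ENNReal.ofReal A *
          ∑' i, weightedSobolevNormP (μ.restrict D) ρ m a p (fun x => φ i x • u x) ∧
      ∑' i, weightedSobolevNormP (μ.restrict D) ρ m a p (fun x => φ i x • u x) ≤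
        ENNReal.ofReal B * weightedSobolevNormP (μ.restrict D) ρ m a p u := by
  obtain ⟨A, hA⟩ := h.exists_weightedSobolevNormP_le_tsum (F := F) μ hD a hp
  obtain ⟨B, hB⟩ := h.exists_tsum_weightedSobolevNormP_le (F := F) μ hD a hp
  have hofReal : ∀ C : ℝ≥0, (C : ℝ≥0∞) ≤ ENNReal.ofReal (C + 1) := fun C => by
    rw [← ENNReal.ofReal_coe_nnreal]
    exact ENNReal.ofReal_le_ofReal (lt_add_one _).le
  exact ⟨A + 1, B + 1, by positivity, by positivity, fun u hu =>
    ⟨(hA u hu).trans (mul_le_mul_left (hofReal A) _),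
      (hB u hu).trans (mul_le_mul_left (hofReal B) _)⟩⟩

/-- localization of Kondratiev spaces on `D = ℝ^d \ S` along a resolution of
unity `{φ_{j,l}}` subordinate to a Whitney decomposition (supports `⊆ 2Q_{j,k_l}`, where
`ρ ∼ 2^{-j}`, derivative bounds `|∂^α φ_{j,l}| ≤ c_α 2^{j|α|}`, uniformly bounded overlap):
`‖u‖_{K^m_{a,p}(D)}^p ∼ Σ_{j,l} ‖φ_{j,l} u‖_{K^m_{a,p}(D)}^p` uniformly in `u`. -/
theorem statement13 (d : ℕ) (hd : 1 ≤ d) (S : Set (EuclideanSpace ℝ (Fin d)))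
    (hS : IsClosed S) (hSnull : volume S = 0)
    (ρ : EuclideanSpace ℝ (Fin d) → ℝ) (hρ : ∀ x ∈ Sᶜ, 0 < ρ x ∧ ρ x ≤ 1)
    (ι : Type) (hι : Countable ι) (lvl : ι → ℕ)
    (φ : ι → EuclideanSpace ℝ (Fin d) → ℝ)
    (hφsmooth : ∀ i, ContDiff ℝ (⊤ : ℕ∞) (φ i))
    (hφrange : ∀ i x, 0 ≤ φ i x ∧ φ i x ≤ 1)
    (hsum : ∀ x ∈ Sᶜ, HasSum (fun i => φ i x) 1)
    (hder : ∀ n : ℕ, ∃ c : ℝ, 0 < c ∧ ∀ i x,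
      ‖iteratedFDeriv ℝ n (φ i) x‖ ≤ c * (2 : ℝ) ^ (lvl i * n))
    (N : ℕ) (hoverlap : ∀ x, {i | x ∈ tsupport (φ i)}.Finite ∧
      {i | x ∈ tsupport (φ i)}.ncard ≤ N)
    (c₁ c₂ : ℝ) (hc₁ : 0 < c₁) (hc₁₂ : c₁ ≤ c₂)
    (hρloc : ∀ i, ∀ x ∈ tsupport (φ i) ∩ Sᶜ,
      c₁ * (2 : ℝ) ^ (-(lvl i : ℤ)) ≤ ρ x ∧ ρ x ≤ c₂ * (2 : ℝ) ^ (-(lvl i : ℤ)))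
    (m : ℕ) (p : ℝ) (hp : 1 < p) (a : ℝ) :
    ∃ A B : ℝ, 0 < A ∧ 0 < B ∧
      ∀ u : EuclideanSpace ℝ (Fin d) → ℂ, ContDiffOn ℝ (m : ℕ∞) u Sᶜ →
        KondratievNormP Sᶜ ρ m a p u
            ≤ ENNReal.ofReal A *
              ∑' i : ι, KondratievNormP Sᶜ ρ m a p (fun x => φ i x • u x) ∧
        (∑' i : ι, KondratievNormP Sᶜ ρ m a p (fun x => φ i x • u x))
            ≤ ENNReal.ofReal B * KondratievNormP Sᶜ ρ m a p u := by
  obtain ⟨M, hφ⟩ := exists_isWhitneyResolution_dyadic (m := m) (fun x hx => (hρ x hx).1)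
    (fun i => ((hφsmooth i).of_le (by exact_mod_cast le_top)).contDiffOn) hsum
    (fun n _ => (hder n).imp fun c hc i x _ => hc.2 i x)
    (fun x _ => encard_le_coe_iff_finite_ncard_le.2 (hoverlap x)) hc₁ hρloc
  exact statement13_general hφ volume hS.isOpen_compl a (one_pos.trans hp)
end

section
/- Fix d ≥ 1, 1 < p < ∞, R ∈ (0,1), λ ∈ ℝ, m ∈ ℕ, a ∈ ℝ, and let u_λ(x) = |x|^{a-d/p}(1+|log|x||)^λ on B_R \ {0}. Then for every multiindex α with |α| ≤ m there is a constant C_α such that |∂^α u_λ(x)| ≤ C_α |x|^{a-d/p-|α|} Σ_{j=0}^{|α|} (1+|log|x||)^{λ-j} for all 0 < |x| < R; consequently ∫_{B_R} ||x|^{|α|-a} ∂^α u_λ|^p dx < ∞ for all |α| ≤ m if and only if λp < -1, i.e. u_λ ∈ K^m_{a,p}(B_R \ {0}) if and only if λp < -1. -/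
open MeasureTheory Set

/-!
The derivative bounds rest on a scaling identity. Let `F (t, z) = |z|^s (1 - t log |z|)^q`. If
`0 < r = |x| < 1` and `L = 1 + |log r|`, then near `x` the function
`u y = |y|^s (1 + |log |y||)^q` equals `u(x) F (L⁻¹, y / r)`. As `(L⁻¹, x / r)` lies in
`[0, 1] × S`, with `S` the unit sphere, a compact set near which `F` is smooth, the `n`-th
derivative of `u` at `x` is at most `C u(x) / r ^ n` with `C` independent of `x`.

Consequently the weighted integrals of all derivatives are bounded by the one of order zero, whose
integrand is `|x|^{-d} (1 + |log |x||)^{λp}`. In polar coordinates and with `r = exp (1 - t)` it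
becomes the integral of `t ^ (λp)` over a neighbourhood of infinity, which is finite iff `λp < -1`.
-/

section IteratedFDeriv

variable {𝕜 E F G : Type*} [NontriviallyNormedField 𝕜] [NormedAddCommGroup E] [NormedSpace 𝕜 E]
  [NormedAddCommGroup F] [NormedSpace 𝕜 F] [NormedAddCommGroup G] [NormedSpace 𝕜 G]

theorem iteratedFDeriv_comp_const_add_clm {f : E → F} (c : E) (g : G →L[𝕜] E) {x : G} {n : ℕ}
    (hf : ContDiffAt 𝕜 n f (c + g x)) :
    iteratedFDeriv 𝕜 n (fun y => f (c + g y)) x =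
      (iteratedFDeriv 𝕜 n f (c + g x)).compContinuousLinearMap fun _ => g := by
  have hshift : ContDiffAt 𝕜 n (fun z => f (c + z)) (g x) :=
    ContDiffAt.comp (g x) (f := fun z => c + z) hf (by fun_prop)
  obtain ⟨U, hU, hUo, hxU⟩ := eventually_nhds_iff.1 (hshift.eventually (by simp))
  have hgU : IsOpen (g ⁻¹' U) := hUo.preimage g.continuous
  have hcomp := g.iteratedFDerivWithin_comp_right
    (fun y hy => (hU y hy).contDiffWithinAt) hUo.uniqueDiffOn hgU.uniqueDiffOn hxU (i := n) le_rfl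
  rwa [iteratedFDerivWithin_of_isOpen n hgU hxU, iteratedFDerivWithin_of_isOpen n hUo hxU,
    iteratedFDeriv_comp_add_left] at hcomp

theorem norm_iteratedFDeriv_comp_const_add_clm_le {f : E → F} (c : E) (g : G →L[𝕜] E) {x : G}
    {n : ℕ} (hf : ContDiffAt 𝕜 n f (c + g x)) :
    ‖iteratedFDeriv 𝕜 n (fun y => f (c + g y)) x‖ ≤
      ‖iteratedFDeriv 𝕜 n f (c + g x)‖ * ‖g‖ ^ n := by
  rw [iteratedFDeriv_comp_const_add_clm c g hf]
  simpa only [Finset.prod_const, Finset.card_univ, Fintype.card_fin] using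
    (iteratedFDeriv 𝕜 n f (c + g x)).norm_compContinuousLinearMap_le fun _ => g

theorem norm_iteratedFDeriv_prodMk_smul_le {f : G × E → F} (t : G) (k : 𝕜) {x : E} {n : ℕ}
    (hf : ContDiffAt 𝕜 n f (t, k • x)) :
    ‖iteratedFDeriv 𝕜 n (fun y => f (t, k • y)) x‖ ≤
      ‖iteratedFDeriv 𝕜 n f (t, k • x)‖ * ‖k‖ ^ n := by
  have hg (y : E) : (t, 0) + (k • ContinuousLinearMap.inr 𝕜 G E) y = (t, k • y) := by simp
  have hnorm : ‖k • ContinuousLinearMap.inr 𝕜 G E‖ ≤ ‖k‖ := by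
    rw [norm_smul]
    exact mul_le_of_le_one_right (norm_nonneg k) (ContinuousLinearMap.norm_inr_le_one 𝕜 G E)
  have hle := norm_iteratedFDeriv_comp_const_add_clm_le (t, (0 : E))
    (k • ContinuousLinearMap.inr 𝕜 G E) (x := x) (n := n) (f := f) (by rwa [hg])
  simp only [hg] at hle
  exact hle.trans (by gcongr)

theorem exists_norm_iteratedFDeriv_le_of_isCompact {f : E → F} {K : Set E} {n : ℕ}
    (hK : IsCompact K) (hf : ∀ x ∈ K, ContDiffAt 𝕜 n f x) :
    ∃ C : ℝ, 0 < C ∧ ∀ x ∈ K, ‖iteratedFDeriv 𝕜 n f x‖ ≤ C := by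
  obtain ⟨M, hM⟩ := hK.exists_bound_of_continuousOn fun x hx =>
    ((hf x hx).continuousAt_iteratedFDeriv le_rfl).continuousWithinAt
  exact ⟨max M 1, by positivity, fun x hx => (hM x hx).trans (le_max_left M 1)⟩

end IteratedFDeriv

section NormPowLog

variable {E : Type*} [NormedAddCommGroup E]

/-- The radial function `‖x‖ ^ s * (1 + |log ‖x‖|) ^ q`, the function `u_λ` of the theorem for
`s = a - d / p` and `q = λ`. -/
noncomputable def normPowLog (s q : ℝ) (x : E) : ℝ :=
  ‖x‖ ^ s * (1 + |Real.log ‖x‖|) ^ q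

/-- The function `(t, z) ↦ ‖z‖ ^ s * (1 - t * log ‖z‖) ^ q`, whose slices at fixed `t` are, up to
scaling, the germs of `normPowLog s q` at the points of the punctured unit ball. The value `t = 0`
corresponds to the limit at the origin. -/
noncomputable def normPowLogProfile (s q : ℝ) (z : ℝ × E) : ℝ :=
  ‖z.2‖ ^ s * (1 - z.1 * Real.log ‖z.2‖) ^ q

theorem normPowLog_nonneg (s q : ℝ) (x : E) : 0 ≤ normPowLog s q x := by
  unfold normPowLog
  positivity

theorem measurable_normPowLog [MeasurableSpace E] [OpensMeasurableSpace E] (s q : ℝ) :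
    Measurable (normPowLog s q : E → ℝ) :=
  (measurable_norm.pow_const s).mul
    ((measurable_norm.log.abs.const_add 1).pow_const q)

theorem normPowLog_rpow (s q p : ℝ) (x : E) :
    normPowLog s q x ^ p = normPowLog (s * p) (q * p) x := by
  simp only [normPowLog]
  rw [Real.mul_rpow (by positivity) (by positivity), ← Real.rpow_mul (norm_nonneg x),
    ← Real.rpow_mul (by positivity)]

theorem norm_rpow_mul_normPowLog (b s q : ℝ) {x : E} (hx : x ≠ 0) :
    ‖x‖ ^ b * normPowLog s q x = normPowLog (b + s) q x := by
  rw [normPowLog, normPowLog, Real.rpow_add (norm_pos_iff.2 hx), mul_assoc]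

theorem normPowLog_eq_mul_profile [NormedSpace ℝ E] (s q : ℝ) {x y : E} (hx : x ≠ 0)
    (hx1 : ‖x‖ ≤ 1) (hy : y ≠ 0) (hy1 : ‖y‖ ≤ 1) :
    normPowLog s q y = normPowLog s q x *
      normPowLogProfile s q ((1 + |Real.log ‖x‖|)⁻¹, ‖x‖⁻¹ • y) := by
  have hx0 : 0 < ‖x‖ := norm_pos_iff.2 hx
  have hy0 : 0 < ‖y‖ := norm_pos_iff.2 hy
  have hlogx : Real.log ‖x‖ ≤ 0 := Real.log_nonpos hx0.le hx1
  have hlogy : Real.log ‖y‖ ≤ 0 := Real.log_nonpos hy0.le hy1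
  have hL : 0 < 1 - Real.log ‖x‖ := by linarith
  have hnorm : ‖‖x‖⁻¹ • y‖ = ‖y‖ / ‖x‖ := by
    rw [norm_smul, norm_inv, norm_norm, inv_mul_eq_div]
  have hlog : 1 - (1 - Real.log ‖x‖)⁻¹ * Real.log (‖y‖ / ‖x‖) =
      (1 - Real.log ‖y‖) / (1 - Real.log ‖x‖) := by
    rw [Real.log_div hy0.ne' hx0.ne']
    field_simp
    ring
  simp only [normPowLog, normPowLogProfile, abs_of_nonpos hlogx, abs_of_nonpos hlogy,
    ← sub_eq_add_neg, hnorm, hlog]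
  rw [Real.div_rpow hy0.le hx0.le, Real.div_rpow (by linarith) hL.le]
  field_simp

end NormPowLog

section DerivativeBound

variable {E : Type*} [NormedAddCommGroup E] [InnerProductSpace ℝ E]

theorem contDiffAt_normPowLogProfile (s q : ℝ) {z : ℝ × E} (hz : ‖z.2‖ = 1) {n : ℕ∞} :
    ContDiffAt ℝ n (normPowLogProfile s q) z := by
  have hz0 : z.2 ≠ 0 := norm_ne_zero_iff.1 (by simp [hz])
  have hnorm : ContDiffAt ℝ n (fun w : ℝ × E => ‖w.2‖) z := contDiffAt_snd.norm ℝ hz0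
  have hlog : ContDiffAt ℝ n (fun w : ℝ × E => 1 - w.1 * Real.log ‖w.2‖) z :=
    contDiffAt_const.sub (contDiffAt_fst.mul (hnorm.log (by simp [hz])))
  exact (hnorm.rpow_const_of_ne (by simp [hz])).mul (hlog.rpow_const_of_ne (by simp [hz]))

theorem exists_norm_iteratedFDeriv_normPowLog_le [FiniteDimensional ℝ E] (s q : ℝ) (n : ℕ) :
    ∃ C : ℝ, 0 < C ∧ ∀ x : E, x ≠ 0 → ‖x‖ < 1 →
      ‖iteratedFDeriv ℝ n (normPowLog s q) x‖ ≤ C * normPowLog s q x / ‖x‖ ^ n := by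
  have hK : IsCompact (Icc (0 : ℝ) 1 ×ˢ Metric.sphere (0 : E) 1) :=
    isCompact_Icc.prod (isCompact_sphere _ _)
  obtain ⟨C, hC, hbound⟩ := exists_norm_iteratedFDeriv_le_of_isCompact (𝕜 := ℝ) (n := n) hK
    fun z hz => contDiffAt_normPowLogProfile s q (mem_sphere_zero_iff_norm.1 hz.2) (n := n)
  refine ⟨C, hC, fun x hx hx1 => ?_⟩
  set t : ℝ := (1 + |Real.log ‖x‖|)⁻¹
  have ht_mem : t ∈ Icc (0 : ℝ) 1 :=
    ⟨by positivity, inv_le_one_of_one_le₀ (le_add_of_nonneg_right (abs_nonneg _))⟩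
  have hunit : ‖‖x‖⁻¹ • x‖ = 1 := norm_smul_inv_norm hx
  have hsmooth : ContDiffAt ℝ n (normPowLogProfile s q) (t, ‖x‖⁻¹ • x) :=
    contDiffAt_normPowLogProfile s q hunit
  have hslice : ContDiffAt ℝ n (fun y => normPowLogProfile s q (t, ‖x‖⁻¹ • y)) x :=
    hsmooth.comp x (f := fun y => (t, ‖x‖⁻¹ • y)) (by fun_prop)
  have hscale : normPowLog s q =ᶠ[nhds x]
      fun y => normPowLog s q x • normPowLogProfile s q (t, ‖x‖⁻¹ • y) := by
    filter_upwards [isOpen_ne.mem_nhds hx,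
      (isOpen_lt continuous_norm continuous_const).mem_nhds hx1] with y hy hy1
    exact normPowLog_eq_mul_profile s q hx hx1.le hy (le_of_lt hy1)
  calc ‖iteratedFDeriv ℝ n (normPowLog s q) x‖
      = normPowLog s q x *
          ‖iteratedFDeriv ℝ n (fun y => normPowLogProfile s q (t, ‖x‖⁻¹ • y)) x‖ := by
        rw [(hscale.iteratedFDeriv ℝ n).self_of_nhds, iteratedFDeriv_const_smul_apply' hslice,
          norm_smul, Real.norm_of_nonneg (normPowLog_nonneg s q x)]
    _ ≤ normPowLog s q x * (C * ‖‖x‖⁻¹‖ ^ n) := by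
        refine mul_le_mul_of_nonneg_left ?_ (normPowLog_nonneg s q x)
        refine (norm_iteratedFDeriv_prodMk_smul_le t ‖x‖⁻¹ hsmooth).trans ?_
        gcongr
        exact hbound _ ⟨ht_mem, mem_sphere_zero_iff_norm.2 hunit⟩
    _ = C * normPowLog s q x / ‖x‖ ^ n := by
        rw [norm_inv, norm_norm, inv_pow]
        ring

theorem exists_norm_iteratedFDeriv_normPowLog_le_sum [FiniteDimensional ℝ E] (s q : ℝ) (n : ℕ) :
    ∃ C : ℝ, 0 < C ∧ ∀ x : E, x ≠ 0 → ‖x‖ < 1 →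
      ‖iteratedFDeriv ℝ n (normPowLog s q) x‖ ≤
        C * ‖x‖ ^ (s - n) * ∑ j ∈ Finset.range (n + 1), (1 + |Real.log ‖x‖|) ^ (q - j) := by
  obtain ⟨C, hC, hbound⟩ := exists_norm_iteratedFDeriv_normPowLog_le (E := E) s q n
  refine ⟨C, hC, fun x hx hx1 => ?_⟩
  have hzeroth : (1 + |Real.log ‖x‖|) ^ q ≤
      ∑ j ∈ Finset.range (n + 1), (1 + |Real.log ‖x‖|) ^ (q - j) := by
    simpa only [Nat.cast_zero, sub_zero] using
      Finset.single_le_sum (f := fun j : ℕ => (1 + |Real.log ‖x‖|) ^ (q - j))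
        (fun j _ => by positivity) (Finset.mem_range.2 n.succ_pos)
  calc ‖iteratedFDeriv ℝ n (normPowLog s q) x‖
      ≤ C * normPowLog s q x / ‖x‖ ^ n := hbound x hx hx1
    _ = C * ‖x‖ ^ (s - n) * (1 + |Real.log ‖x‖|) ^ q := by
        rw [normPowLog, Real.rpow_sub_natCast (norm_ne_zero_iff.2 hx)]
        ring
    _ ≤ _ := by gcongr

end DerivativeBound

section RadialIntegral

variable {F : Type*} [NormedAddCommGroup F] [NormedSpace ℝ F]

theorem image_exp_const_sub_Ioi (c : ℝ) {R : ℝ} (hR : 0 < R) :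
    (fun t => Real.exp (c - t)) '' Ioi (c - Real.log R) = Ioo 0 R := by
  rw [← image_image Real.exp (fun t => c - t), image_const_sub_Ioi, sub_sub_cancel,
    Real.image_exp_Iio, Real.exp_log hR]

theorem integrableOn_Ioo_zero_iff_comp_exp_const_sub (c : ℝ) {R : ℝ} (hR : 0 < R) (f : ℝ → F) :
    IntegrableOn f (Ioo 0 R) ↔
      IntegrableOn (fun t => Real.exp (c - t) • f (Real.exp (c - t))) (Ioi (c - Real.log R)) := by
  have hderiv (t : ℝ) : HasDerivAt (fun u => Real.exp (c - u)) (-Real.exp (c - t)) t := by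
    simpa using ((hasDerivAt_id t).const_sub c).exp
  have hinj : InjOn (fun t => Real.exp (c - t)) (Ioi (c - Real.log R)) :=
    (Real.exp_injective.comp sub_right_injective).injOn
  rw [← image_exp_const_sub_Ioi c hR, integrableOn_image_iff_integrableOn_abs_deriv_smul
    measurableSet_Ioi (fun t _ => (hderiv t).hasDerivWithinAt) hinj]
  simp only [abs_neg, Real.abs_exp]

theorem integrableOn_Ioo_inv_mul_one_add_abs_log_rpow_iff {R : ℝ} (hR0 : 0 < R) (hR1 : R ≤ 1)
    (q : ℝ) :
    IntegrableOn (fun r => r⁻¹ * (1 + |Real.log r|) ^ q) (Ioo 0 R) ↔ q < -1 := by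
  have hlogR : Real.log R ≤ 0 := Real.log_nonpos hR0.le hR1
  rw [integrableOn_Ioo_zero_iff_comp_exp_const_sub 1 hR0,
    ← integrableOn_Ioi_rpow_iff (s := q) (t := 1 - Real.log R) (by linarith)]
  refine integrableOn_congr_fun (fun t ht => ?_) measurableSet_Ioi
  have ht1 : 1 - t ≤ 0 := by linarith [mem_Ioi.1 ht]
  simp only [smul_eq_mul, Real.log_exp, abs_of_nonpos ht1]
  rw [mul_inv_cancel_left₀ (Real.exp_ne_zero _), neg_sub, add_sub_cancel]

variable {E : Type*} [NormedAddCommGroup E] [NormedSpace ℝ E] [FiniteDimensional ℝ E]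
  [Nontrivial E] [MeasurableSpace E] [BorelSpace E] (μ : Measure E) [μ.IsAddHaarMeasure]

theorem integrableOn_ball_norm_rpow_neg_finrank_smul_iff (f : ℝ → F) (R : ℝ) :
    IntegrableOn (fun x : E => ‖x‖ ^ (-(Module.finrank ℝ E : ℝ)) • f ‖x‖) (Metric.ball 0 R) μ ↔
      IntegrableOn (fun r => r⁻¹ • f r) (Ioo 0 R) := by
  rw [integrableOn_fun_norm_addHaar μ (f := fun r => r ^ (-(Module.finrank ℝ E : ℝ)) • f r)]
  refine integrableOn_congr_fun (fun r hr => ?_) measurableSet_Ioo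
  have hdim : 1 ≤ Module.finrank ℝ E := Module.finrank_pos
  simp only [smul_smul]
  rw [Real.rpow_neg hr.1.le, Real.rpow_natCast, pow_sub₀ r hr.1.ne' hdim, pow_one,
    mul_right_comm, mul_inv_cancel₀ (pow_ne_zero _ hr.1.ne'), one_mul]

theorem integrableOn_ball_normPowLog_neg_finrank_iff {R : ℝ} (hR0 : 0 < R) (hR1 : R ≤ 1)
    (q : ℝ) :
    IntegrableOn (normPowLog (-(Module.finrank ℝ E : ℝ)) q) (Metric.ball (0 : E) R) μ ↔
      q < -1 :=
  (integrableOn_ball_norm_rpow_neg_finrank_smul_iff μ (fun r => (1 + |Real.log r|) ^ q) R).trans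
    (integrableOn_Ioo_inv_mul_one_add_abs_log_rpow_iff hR0 hR1 q)

end RadialIntegral

section Kondratiev

variable {E F : Type*} [NormedAddCommGroup E] [NormedSpace ℝ E] [NormedAddCommGroup F]
  [NormedSpace ℝ F] [MeasurableSpace E]

/-- The contribution of the derivatives of order `n` to the `p`-th power of the norm of `u` in the
weighted Sobolev (Kondratiev) space `K^m_{a,p}(S)` with weight `ρ x = ‖x‖`. The partial derivatives
`∂^α u` with `|α| = n` are measured together, by the operator norm of the `n`-th derivative. -/
noncomputable def kondratievIntegral (μ : Measure E) (a p : ℝ) (n : ℕ) (u : E → F) (S : Set E) :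
    ENNReal :=
  ∫⁻ x in S, ENNReal.ofReal ((‖x‖ ^ ((n : ℝ) - a) * ‖iteratedFDeriv ℝ n u x‖) ^ p) ∂μ

theorem kondratievIntegral_le_of_norm_iteratedFDeriv_le {μ : Measure E} {a p C : ℝ} {n : ℕ}
    {u : E → F} {S : Set E} (hp : 0 ≤ p) (hC : 0 ≤ C) (hS : MeasurableSet S) (h0 : (0 : E) ∉ S)
    (hu : ∀ x ∈ S, ‖iteratedFDeriv ℝ n u x‖ ≤ C * ‖u x‖ / ‖x‖ ^ n) :
    kondratievIntegral μ a p n u S ≤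
      ENNReal.ofReal (C ^ p) * kondratievIntegral μ a p 0 u S := by
  rw [kondratievIntegral, kondratievIntegral, ← lintegral_const_mul' _ _ ENNReal.ofReal_ne_top]
  refine setLIntegral_mono' hS fun x hx => ?_
  have hx0 : ‖x‖ ≠ 0 := norm_ne_zero_iff.2 (ne_of_mem_of_not_mem hx h0)
  rw [← ENNReal.ofReal_mul (by positivity), ← Real.mul_rpow hC (by positivity),
    norm_iteratedFDeriv_zero]
  refine ENNReal.ofReal_le_ofReal (Real.rpow_le_rpow (by positivity) ?_ hp)
  calc ‖x‖ ^ ((n : ℝ) - a) * ‖iteratedFDeriv ℝ n u x‖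
      ≤ ‖x‖ ^ ((n : ℝ) - a) * (C * ‖u x‖ / ‖x‖ ^ n) := by
        gcongr
        exact hu x hx
    _ = C * (‖x‖ ^ (((0 : ℕ) : ℝ) - a) * ‖u x‖) := by
        rw [show (n : ℝ) - a = (((0 : ℕ) : ℝ) - a) + n by push_cast; ring,
          Real.rpow_add_natCast hx0]
        field_simp

theorem kondratievIntegral_zero_normPowLog {μ : Measure E} (a p s q : ℝ) {S : Set E}
    (hS : MeasurableSet S) (h0 : (0 : E) ∉ S) :
    kondratievIntegral μ a p 0 (normPowLog s q) S =
      ∫⁻ x in S, ENNReal.ofReal (normPowLog ((s - a) * p) (q * p) x) ∂μ := by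
  refine setLIntegral_congr_fun hS fun x hx => ?_
  simp only [norm_iteratedFDeriv_zero, Real.norm_of_nonneg (normPowLog_nonneg s q x)]
  rw [norm_rpow_mul_normPowLog _ s q (ne_of_mem_of_not_mem hx h0), normPowLog_rpow,
    Nat.cast_zero, zero_sub, neg_add_eq_sub]

theorem kondratievIntegral_zero_normPowLog_lt_top_iff [FiniteDimensional ℝ E] [Nontrivial E]
    [BorelSpace E] (μ : Measure E) [μ.IsAddHaarMeasure] {p R : ℝ} (hp : p ≠ 0) (hR0 : 0 < R)
    (hR1 : R ≤ 1) (q a : ℝ) :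
    kondratievIntegral μ a p 0 (normPowLog (a - Module.finrank ℝ E / p) q)
        (Metric.ball (0 : E) R \ {0}) < ⊤ ↔ q * p < -1 := by
  have hexp : (a - Module.finrank ℝ E / p - a) * p = -(Module.finrank ℝ E : ℝ) := by
    field_simp
    ring
  have hpunctured : (Metric.ball (0 : E) R \ {0} : Set E) =ᵐ[μ] Metric.ball (0 : E) R :=
    sdiff_null_ae_eq_self (by simp)
  rw [kondratievIntegral_zero_normPowLog a p _ q
      (measurableSet_ball.diff (measurableSet_singleton 0)) (by simp), hexp,
    setLIntegral_congr hpunctured, lt_top_iff_ne_top,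
    lintegral_ofReal_ne_top_iff_integrable (measurable_normPowLog _ _).aestronglyMeasurable
      (.of_forall (normPowLog_nonneg _ _))]
  exact integrableOn_ball_normPowLog_neg_finrank_iff μ hR0 hR1 (q * p)

end Kondratiev

theorem statement19_general {E : Type*} [NormedAddCommGroup E] [InnerProductSpace ℝ E]
    [FiniteDimensional ℝ E] [Nontrivial E] [MeasurableSpace E] [BorelSpace E] (μ : Measure E)
    [μ.IsAddHaarMeasure] {p : ℝ} (hp : 0 < p) {R : ℝ} (hR0 : 0 < R) (hR1 : R ≤ 1) (q : ℝ) (m : ℕ)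
    (a : ℝ) :
    (∀ n : ℕ, n ≤ m → ∃ C : ℝ, 0 < C ∧ ∀ x : E, x ≠ 0 → ‖x‖ < R →
      ‖iteratedFDeriv ℝ n (normPowLog (a - Module.finrank ℝ E / p) q) x‖ ≤
        C * ‖x‖ ^ (a - Module.finrank ℝ E / p - n) *
          ∑ j ∈ Finset.range (n + 1), (1 + |Real.log ‖x‖|) ^ (q - j)) ∧
    ((∀ n : ℕ, n ≤ m → kondratievIntegral μ a p n (normPowLog (a - Module.finrank ℝ E / p) q)
        (Metric.ball (0 : E) R \ {0}) < ⊤) ↔ q * p < -1) := by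
  refine ⟨fun n _ => ?_, fun h => ?_, fun hq n _ => ?_⟩
  · obtain ⟨C, hC, hbound⟩ := exists_norm_iteratedFDeriv_normPowLog_le_sum (E := E)
      (a - Module.finrank ℝ E / p) q n
    exact ⟨C, hC, fun x hx hxR => hbound x hx (hxR.trans_le hR1)⟩
  · exact (kondratievIntegral_zero_normPowLog_lt_top_iff μ hp.ne' hR0 hR1 q a).1 (h 0 m.zero_le)
  · obtain ⟨C, hC, hbound⟩ := exists_norm_iteratedFDeriv_normPowLog_le (E := E)
      (a - Module.finrank ℝ E / p) q n
    refine (kondratievIntegral_le_of_norm_iteratedFDeriv_le hp.le hC.le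
      (measurableSet_ball.diff (measurableSet_singleton 0)) (by simp) fun x hx => ?_).trans_lt
      (ENNReal.mul_lt_top ENNReal.ofReal_lt_top
        ((kondratievIntegral_zero_normPowLog_lt_top_iff μ hp.ne' hR0 hR1 q a).2 hq))
    rw [Real.norm_of_nonneg (normPowLog_nonneg _ q x)]
    exact hbound x hx.2 ((mem_ball_zero_iff.1 hx.1).trans_le hR1)

/-- for `u_λ(x) = |x|^{a-d/p}(1+|log|x||)^λ` on the punctured ball
`B_R \ {0}` (`R < 1`): (i) derivative bounds
`|∂^α u_λ(x)| ≤ C_α |x|^{a-d/p-|α|} Σ_{j=0}^{|α|} (1+|log|x||)^{λ-j}` for `|α| ≤ m`;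
and (ii) `∫_{B_R} ||x|^{|α|-a} ∂^α u_λ|^p dx < ∞` for all `|α| ≤ m` iff `λp < -1`,
i.e. `u_λ ∈ K^m_{a,p}(B_R \ {0})` iff `λp < -1`. -/
theorem statement19 (d : ℕ) (hd : 1 ≤ d) (p : ℝ) (hp : 1 < p)
    (R : ℝ) (hR0 : 0 < R) (hR1 : R < 1) (lam : ℝ) (m : ℕ) (a : ℝ) :
    (∀ n : ℕ, n ≤ m → ∃ C : ℝ, 0 < C ∧
      ∀ x : EuclideanSpace ℝ (Fin d), x ≠ 0 → ‖x‖ < R →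
        ‖iteratedFDeriv ℝ n
            (fun y => ‖y‖ ^ (a - (d : ℝ) / p) * (1 + |Real.log ‖y‖|) ^ lam) x‖
          ≤ C * ‖x‖ ^ (a - (d : ℝ) / p - n) *
            ∑ j ∈ Finset.range (n + 1), (1 + |Real.log ‖x‖|) ^ (lam - j)) ∧
    ((∀ n : ℕ, n ≤ m →
        (∫⁻ x in (Metric.ball (0 : EuclideanSpace ℝ (Fin d)) R) \ {0},
          ENNReal.ofReal ((‖x‖ ^ ((n : ℝ) - a) *
            ‖iteratedFDeriv ℝ n
              (fun y => ‖y‖ ^ (a - (d : ℝ) / p) * (1 + |Real.log ‖y‖|) ^ lam) x‖) ^ p)) < ⊤)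
      ↔ lam * p < -1) := by
  have : Nontrivial (EuclideanSpace ℝ (Fin d)) :=
    Module.nontrivial_of_finrank_pos (R := ℝ) (finrank_euclideanSpace_fin.ge.trans_lt' hd)
  simpa only [finrank_euclideanSpace_fin] using! statement19_general
    (volume : Measure (EuclideanSpace ℝ (Fin d))) (zero_lt_one.trans hp) hR0 hR1.le lam m a
end
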